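/- Let n ≥ 1 be a natural number, let α ∈ (4n−3, 4n−1), set ν = (1−α)/2, let 0 < η < 1, and suppose (H_0) holds: 0 < λ < j_{ν,1}², 0 < δ < 1, δ·η^ν·J_ν(η·√λ) − J_ν(√λ) ≥ 0, and J_{−ν}(√λ) − δ·η^ν·J_{−ν}(η·√λ) > 0. Then the Green's function G satisfies G(x,t) ≤ 0 for all x ∈ [0,1] and t ∈ (0,1]. -/

import Mathlib

/-- The Bessel function of the first kind of real order `μ`. -/
noncomputable def besselJ (μ x : ℝ) : ℝ :=
  ∑' m : ℕ, ((-1 : ℝ) ^ m / ((m.factorial : ℝ) * Real.Gamma ((m : ℝ) + μ + 1))) *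
    (x / 2) ^ (2 * (m : ℝ) + μ)

/-- The Green's function for the three-point singular BVP
`−(x^α y')' − λ x^α y = 0`, `y'(0) = 0`, `y(1) = δ·y(η)` with `λ > 0` and
`ν = (1−α)/2`, expressed through Bessel functions of the first kind. -/
noncomputable def greenJ (ν lam δ η x t : ℝ) : ℝ :=
  let s := Real.sqrt lam
  let c := Real.pi * (Real.sin (Real.pi * ν))⁻¹ / 2
  let D := besselJ (-ν) s - δ * η ^ ν * besselJ (-ν) (η * s)
  if t ≤ η then
    if x ≤ t then
      c * t ^ ν * x ^ ν * besselJ (-ν) (x * s) *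
        (δ * η ^ ν * (besselJ ν (η * s) * besselJ (-ν) (t * s)
            - besselJ (-ν) (η * s) * besselJ ν (t * s))
          + (besselJ (-ν) s * besselJ ν (t * s) - besselJ ν s * besselJ (-ν) (t * s))) / D
    else
      c * t ^ ν * x ^ ν * besselJ (-ν) (t * s) *
        (besselJ (-ν) (x * s) * (δ * η ^ ν * besselJ ν (η * s) - besselJ ν s) / D
          + besselJ ν (x * s))
  else
    if x ≤ t then
      c * t ^ ν * x ^ ν * besselJ (-ν) (x * s) *
        (besselJ (-ν) s * besselJ ν (t * s) - besselJ ν s * besselJ (-ν) (t * s)) / D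
    else
      c * t ^ ν * x ^ ν *
        (besselJ (-ν) (x * s) * (δ * η ^ ν * besselJ (-ν) (η * s) * besselJ ν (t * s)
            - besselJ ν s * besselJ (-ν) (t * s)) / D
          + besselJ (-ν) (t * s) * besselJ ν (x * s))

/-!
Write `J_μ(x) = (x/2)^μ C_μ(-(x/2)²)` with `C_μ` the entire Bessel–Clifford function. Since
`C_μ' = C_{μ+1}`, the three-term recurrence makes the Wronskian of `C_μ` and `C_{-μ}` constant, and
Euler's reflection formula identifies the constant as `sin(πμ)/π`. For `ν < 0` with `sin(πν) < 0`
this shows that `J_{-ν}/J_ν` increases from `0` on `(0, j_{ν,1})`. Hence `J_ν` and `J_{-ν}` are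
positive there, and so is the cross product `J_ν(u) J_{-ν}(v) - J_{-ν}(u) J_ν(v)` for `u < v`. On
each of its four pieces, `G` is the negative factor `π csc(πν)/2 · t^ν x^ν` times a combination of
these quantities with nonnegative coefficients.
-/

open Real Set

section PowerSeries

theorem hasDerivAt_tsum_mul_pow {𝕜 : Type*} [RCLike 𝕜] {a : ℕ → 𝕜} {r : ℝ} {z : 𝕜} (hz : ‖z‖ < r)
    (ha : Summable fun m : ℕ ↦ (m + 1) * ‖a (m + 1)‖ * r ^ m) :
    HasDerivAt (fun w ↦ ∑' m, a m * w ^ m) (∑' m : ℕ, (m + 1) * a (m + 1) * z ^ m) z := by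
  have hr : 0 < r := (norm_nonneg z).trans_lt hz
  have hbound : Summable fun m : ℕ ↦ ‖a m‖ * (m * r ^ (m - 1)) := by
    refine (summable_nat_add_iff 1).1 (ha.congr fun m ↦ ?_)
    simp only [Nat.add_sub_cancel, Nat.cast_add, Nat.cast_one]
    ring
  have hle (m : ℕ) (w : 𝕜) (hw : w ∈ Metric.ball 0 r) :
      ‖a m * (m * w ^ (m - 1))‖ ≤ ‖a m‖ * (m * r ^ (m - 1)) := by
    rw [norm_mul, norm_mul, norm_pow, RCLike.norm_natCast]
    gcongr
    exact (mem_ball_zero_iff.1 hw).le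
  have hz_mem : z ∈ Metric.ball 0 r := mem_ball_zero_iff.2 hz
  have hsum_zero : Summable fun m ↦ a m * (0 : 𝕜) ^ m :=
    summable_of_ne_finset_zero (s := {0}) fun m hm ↦ by
      rw [zero_pow (by simpa using hm), mul_zero]
  have hderiv := hasDerivAt_tsum_of_isPreconnected hbound Metric.isOpen_ball
    (convex_ball 0 r).isPreconnected (fun m w _ ↦ (hasDerivAt_pow m w).const_mul (a m)) hle
    (Metric.mem_ball_self hr) hsum_zero hz_mem
  refine hderiv.congr_deriv ?_
  rw [(Summable.of_norm_bounded hbound fun m ↦ hle m z hz_mem).tsum_eq_zero_add]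
  simp only [Nat.cast_zero, zero_mul, mul_zero, zero_add, Nat.add_sub_cancel, Nat.cast_add,
    Nat.cast_one]
  exact tsum_congr fun m ↦ by ring

end PowerSeries

section BesselClifford

/-- The Taylor coefficients of the Bessel–Clifford function of order `μ`. As `Real.Gamma` vanishes
at its poles, `Γ⁻¹` is the reciprocal Gamma function there as well, and no order is exceptional. -/
noncomputable def besselCliffordCoeff (μ : ℝ) (m : ℕ) : ℝ :=
  (m.factorial * Gamma (m + μ + 1))⁻¹

/-- The Bessel–Clifford function `C_μ(z) = ∑ zᵐ / (m! Γ(m+μ+1))`, the entire factor of `J_μ`. -/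
noncomputable def besselClifford (μ z : ℝ) : ℝ :=
  ∑' m, besselCliffordCoeff μ m * z ^ m

theorem inv_Gamma_eq_self_mul_inv_Gamma_add_one (s : ℝ) : (Gamma s)⁻¹ = s * (Gamma (s + 1))⁻¹ := by
  rcases eq_or_ne s 0 with rfl | hs
  · simp
  · rw [Gamma_add_one hs, mul_inv, mul_inv_cancel_left₀ hs]

theorem besselCliffordCoeff_eq (μ : ℝ) (m : ℕ) :
    besselCliffordCoeff μ m = (m + μ + 1) * besselCliffordCoeff (μ + 1) m := by
  have hΓ := inv_Gamma_eq_self_mul_inv_Gamma_add_one (m + μ + 1)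
  rw [besselCliffordCoeff, besselCliffordCoeff, mul_inv, mul_inv, hΓ, ← add_assoc (m : ℝ) μ 1]
  ring

theorem succ_mul_besselCliffordCoeff_succ (μ : ℝ) (m : ℕ) :
    (m + 1) * besselCliffordCoeff μ (m + 1) = besselCliffordCoeff (μ + 1) m := by
  have harg : ((m + 1 : ℕ) : ℝ) + μ + 1 = m + (μ + 1) + 1 := by push_cast; ring
  have hm : (m : ℝ) + 1 ≠ 0 := m.cast_add_one_ne_zero
  rw [besselCliffordCoeff, besselCliffordCoeff, harg, Nat.factorial_succ, Nat.cast_mul, mul_assoc,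
    mul_inv, Nat.cast_add_one, mul_inv_cancel_left₀ hm]

theorem summable_besselClifford (μ z : ℝ) :
    Summable fun m ↦ besselCliffordCoeff μ m * z ^ m := by
  refine summable_of_ratio_norm_eventually_le (r := 1 / 2) (by norm_num) ?_
  have hlarge : ∀ᶠ m : ℕ in Filter.atTop, 2 * |z| ≤ m + μ + 1 := by
    filter_upwards [tendsto_natCast_atTop_atTop.eventually_ge_atTop (2 * |z| - μ - 1)] with m hm
    linarith
  filter_upwards [hlarge] with m hm
  have hrec : besselCliffordCoeff μ m
      = (m + μ + 1) * ((m + 1) * besselCliffordCoeff μ (m + 1)) := by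
    rw [succ_mul_besselCliffordCoeff_succ, ← besselCliffordCoeff_eq]
  have hm_pos : (0 : ℝ) ≤ m + μ + 1 := le_trans (by positivity) hm
  have hfactor : 2 * |z| ≤ (m + μ + 1) * (m + 1) :=
    hm.trans (le_mul_of_one_le_right hm_pos (by simp))
  simp only [norm_mul, norm_pow, norm_eq_abs]
  calc |besselCliffordCoeff μ (m + 1)| * |z| ^ (m + 1)
      = 1 / 2 * (2 * |z|) * |besselCliffordCoeff μ (m + 1)| * |z| ^ m := by ring
    _ ≤ 1 / 2 * ((m + μ + 1) * (m + 1)) * |besselCliffordCoeff μ (m + 1)| * |z| ^ m := by gcongr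
    _ = 1 / 2 * (|besselCliffordCoeff μ m| * |z| ^ m) := by
      rw [hrec, abs_mul, abs_mul, abs_of_nonneg hm_pos,
        abs_of_nonneg (by positivity : (0 : ℝ) ≤ m + 1)]
      ring

theorem hasDerivAt_besselClifford (μ z : ℝ) :
    HasDerivAt (besselClifford μ) (besselClifford (μ + 1) z) z := by
  have hsum : Summable fun m : ℕ ↦ (m + 1) * ‖besselCliffordCoeff μ (m + 1)‖ * (|z| + 1) ^ m := by
    refine (summable_besselClifford (μ + 1) (|z| + 1)).norm.congr fun m ↦ ?_
    rw [← succ_mul_besselCliffordCoeff_succ, norm_mul, norm_mul, norm_pow,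
      norm_of_nonneg (by positivity : (0 : ℝ) ≤ m + 1),
      norm_of_nonneg (by positivity : 0 ≤ |z| + 1)]
  refine (hasDerivAt_tsum_mul_pow (lt_add_one ‖z‖) hsum).congr_deriv (tsum_congr fun m ↦ ?_)
  rw [succ_mul_besselCliffordCoeff_succ]

theorem continuous_besselClifford (μ : ℝ) : Continuous (besselClifford μ) :=
  continuous_iff_continuousAt.2 fun z ↦ (hasDerivAt_besselClifford μ z).continuousAt

theorem besselClifford_zero (μ : ℝ) : besselClifford μ 0 = (Gamma (μ + 1))⁻¹ := by
  rw [besselClifford, tsum_eq_single 0 fun m hm ↦ by rw [zero_pow hm, mul_zero]]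
  simp [besselCliffordCoeff]

theorem besselClifford_recurrence (μ z : ℝ) :
    besselClifford μ z
      = (μ + 1) * besselClifford (μ + 1) z + z * besselClifford (μ + 1 + 1) z := by
  have hshift : HasSum (fun m : ℕ ↦ m * (besselCliffordCoeff (μ + 1) m * z ^ m))
      (z * besselClifford (μ + 1 + 1) z) := by
    rw [← hasSum_nat_add_iff' 1]
    simp only [Finset.range_one, Finset.sum_singleton, Nat.cast_zero, zero_mul, sub_zero]
    refine ((summable_besselClifford (μ + 1 + 1) z).hasSum.mul_left z).congr_fun fun m ↦ ?_
    rw [← succ_mul_besselCliffordCoeff_succ (μ + 1)]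
    push_cast
    ring
  refine HasSum.tsum_eq
    ((((summable_besselClifford (μ + 1) z).hasSum.mul_left (μ + 1)).add hshift).congr_fun
      fun m ↦ ?_)
  rw [besselCliffordCoeff_eq]
  ring

theorem besselClifford_zero_mul_neg (μ : ℝ) :
    μ * (besselClifford μ 0 * besselClifford (-μ) 0) = sin (π * μ) / π := by
  rw [besselClifford_zero, besselClifford_zero, ← mul_assoc,
    ← inv_Gamma_eq_self_mul_inv_Gamma_add_one, ← mul_inv, neg_add_eq_sub, Gamma_mul_Gamma_one_sub,
    inv_div]

theorem besselClifford_wronskian (μ z : ℝ) :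
    μ * (besselClifford μ z * besselClifford (-μ) z)
      + z * (besselClifford (μ + 1) z * besselClifford (-μ) z
        - besselClifford μ z * besselClifford (-μ + 1) z) = sin (π * μ) / π := by
  set W : ℝ → ℝ := fun z ↦ μ * (besselClifford μ z * besselClifford (-μ) z)
    + z * (besselClifford (μ + 1) z * besselClifford (-μ) z
      - besselClifford μ z * besselClifford (-μ + 1) z) with hW
  have hderiv (z : ℝ) : HasDerivAt W 0 z := by
    have hC := hasDerivAt_besselClifford μ z
    have hC' := hasDerivAt_besselClifford (μ + 1) z
    have hD := hasDerivAt_besselClifford (-μ) z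
    have hD' := hasDerivAt_besselClifford (-μ + 1) z
    refine (((hC.mul hD).const_mul μ).add
      ((hasDerivAt_id z).mul ((hC'.mul hD).sub (hC.mul hD')))).congr_deriv ?_
    simp only [Pi.sub_apply, Pi.mul_apply, id]
    linear_combination besselClifford μ z * besselClifford_recurrence (-μ) z
      - besselClifford (-μ) z * besselClifford_recurrence μ z
  calc W z = W 0 := is_const_of_deriv_eq_zero (fun z ↦ (hderiv z).differentiableAt)
        (fun z ↦ (hderiv z).deriv) z 0
    _ = sin (π * μ) / π := by
      simp only [hW, zero_mul, add_zero, besselClifford_zero_mul_neg]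

theorem besselJ_eq_rpow_mul_besselClifford (μ : ℝ) {x : ℝ} (hx : 0 < x) :
    besselJ μ x = (x / 2) ^ μ * besselClifford μ (-(x / 2) ^ 2) := by
  have hx2 : 0 < x / 2 := half_pos hx
  rw [besselJ, besselClifford, ← tsum_mul_left]
  refine tsum_congr fun m ↦ ?_
  rw [rpow_add hx2, rpow_mul hx2.le, rpow_natCast, rpow_two, besselCliffordCoeff,
    neg_pow ((x / 2) ^ 2)]
  ring

end BesselClifford

section OppositeOrders

variable {ν s : ℝ}

theorem Gamma_add_one_pos_of_sin_neg (hν : ν < 0) (hsin : sin (π * ν) < 0) :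
    0 < Gamma (ν + 1) := by
  have hreflection : Gamma (-ν) * Gamma (ν + 1) = π / sin (π * -ν) := by
    rw [← Gamma_mul_Gamma_one_sub, sub_neg_eq_add, add_comm 1 ν]
  have hpos : 0 < Gamma (-ν) * Gamma (ν + 1) := by
    rw [hreflection, mul_neg, sin_neg]
    exact div_pos pi_pos (neg_pos.2 hsin)
  exact pos_of_mul_pos_right hpos (Gamma_pos_of_pos (neg_pos.2 hν)).le

theorem besselClifford_ne_zero (hzero : ∀ t ∈ Ioc 0 s, besselJ ν t ≠ 0) (hs : 0 ≤ s) {y : ℝ}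
    (hy : y ∈ Ioc 0 ((s / 2) ^ 2)) : besselClifford ν (-y) ≠ 0 := by
  have hsqrt_pos : 0 < √y := sqrt_pos.2 hy.1
  have hsqrt_le : √y ≤ s / 2 := (sqrt_le_left (by positivity)).2 hy.2
  have hJ := hzero (2 * √y) ⟨by positivity, by linarith⟩
  rw [besselJ_eq_rpow_mul_besselClifford ν (by positivity), mul_div_cancel_left₀ _ two_ne_zero,
    sq_sqrt hy.1.le] at hJ
  exact right_ne_zero_of_mul hJ

theorem besselClifford_pos (hν : ν < 0) (hsin : sin (π * ν) < 0)
    (hzero : ∀ t ∈ Ioc 0 s, besselJ ν t ≠ 0) (hs : 0 ≤ s) {y : ℝ}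
    (hy : y ∈ Icc 0 ((s / 2) ^ 2)) : 0 < besselClifford ν (-y) := by
  have hpos_zero : 0 < besselClifford ν (-0) := by
    rw [neg_zero, besselClifford_zero]
    exact inv_pos.2 (Gamma_add_one_pos_of_sin_neg hν hsin)
  by_contra! hnonpos
  obtain ⟨z, hz, hCz⟩ := intermediate_value_Icc' hy.1
    ((continuous_besselClifford ν).comp continuous_neg).continuousOn ⟨hnonpos, hpos_zero.le⟩
  rcases hz.1.eq_or_lt with rfl | hz_pos
  · exact hpos_zero.ne' hCz
  · exact besselClifford_ne_zero hzero hs ⟨hz_pos, hz.2.trans hy.2⟩ hCz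

/-- The quotient `J_{-ν}(x) / J_ν(x)` as a function of `y = (x/2)²`. Unlike the quotient of Bessel
functions, for `ν < 0` it is continuous up to `y = 0`, where it vanishes. -/
noncomputable def besselQuotient (ν y : ℝ) : ℝ :=
  y ^ (-ν) * besselClifford (-ν) (-y) / besselClifford ν (-y)

theorem besselQuotient_zero (hν : ν < 0) : besselQuotient ν 0 = 0 := by
  rw [besselQuotient, zero_rpow (neg_pos.2 hν).ne', zero_mul, zero_div]

theorem besselJ_neg_eq_besselQuotient_mul {x : ℝ} (hx : 0 < x) (hJ : besselJ ν x ≠ 0) :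
    besselJ (-ν) x = besselQuotient ν ((x / 2) ^ 2) * besselJ ν x := by
  have hx2 : 0 < x / 2 := half_pos hx
  have hrpow : ((x / 2) ^ 2) ^ (-ν) * (x / 2) ^ ν = (x / 2) ^ (-ν) := by
    rw [← rpow_two, ← rpow_mul hx2.le, ← rpow_add hx2]
    congr 1
    ring
  rw [besselJ_eq_rpow_mul_besselClifford ν hx] at hJ ⊢
  have hC := right_ne_zero_of_mul hJ
  rw [besselJ_eq_rpow_mul_besselClifford (-ν) hx, besselQuotient, ← hrpow,
    div_mul_eq_mul_div, eq_div_iff hC]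
  ring

theorem hasDerivAt_besselQuotient {y : ℝ} (hy : 0 < y) (hC : besselClifford ν (-y) ≠ 0) :
    HasDerivAt (besselQuotient ν)
      (y ^ (-ν - 1) * (-sin (π * ν) / π) / besselClifford ν (-y) ^ 2) y := by
  have hnum := (hasDerivAt_rpow_const (p := -ν) (Or.inl hy.ne')).mul
    ((hasDerivAt_besselClifford (-ν) (-y)).comp y (hasDerivAt_neg y))
  have hden := (hasDerivAt_besselClifford ν (-y)).comp y (hasDerivAt_neg y)
  refine (hnum.div hden hC).congr_deriv ?_
  have hrpow : y ^ (-ν) = y ^ (-ν - 1) * y := by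
    rw [rpow_sub_one hy.ne', div_mul_cancel₀ _ hy.ne']
  simp only [Pi.mul_apply, Function.comp_apply, hrpow]
  congr 1
  linear_combination -y ^ (-ν - 1) * besselClifford_wronskian ν (-y)

theorem strictMonoOn_besselQuotient (hν : ν < 0) (hsin : sin (π * ν) < 0)
    (hzero : ∀ t ∈ Ioc 0 s, besselJ ν t ≠ 0) (hs : 0 ≤ s) :
    StrictMonoOn (besselQuotient ν) (Icc 0 ((s / 2) ^ 2)) := by
  have hC {y : ℝ} (hy : y ∈ Icc 0 ((s / 2) ^ 2)) : 0 < besselClifford ν (-y) :=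
    besselClifford_pos hν hsin hzero hs hy
  have hcont (μ : ℝ) : Continuous fun y ↦ besselClifford μ (-y) :=
    (continuous_besselClifford μ).comp continuous_neg
  refine strictMonoOn_of_hasDerivWithinAt_pos (convex_Icc _ _)
    (((continuous_rpow_const (neg_pos.2 hν).le).mul (hcont (-ν))).continuousOn.div
      (hcont ν).continuousOn fun y hy ↦ (hC hy).ne')
    (fun y hy ↦ (hasDerivAt_besselQuotient ?_ ?_).hasDerivWithinAt) fun y hy ↦ ?_
  all_goals rw [interior_Icc] at hy
  · exact hy.1
  · exact (hC (Ioo_subset_Icc_self hy)).ne'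
  · have hCy := hC (Ioo_subset_Icc_self hy)
    have hyν : 0 < y ^ (-ν - 1) := rpow_pos_of_pos hy.1 _
    have hW : 0 < -sin (π * ν) / π := div_pos (neg_pos.2 hsin) pi_pos
    positivity

theorem half_sq_mem_Icc {t : ℝ} (ht : t ∈ Ioc 0 s) : (t / 2) ^ 2 ∈ Icc 0 ((s / 2) ^ 2) :=
  ⟨sq_nonneg _, pow_le_pow_left₀ (half_pos ht.1).le (by linarith [ht.2]) 2⟩

theorem besselJ_pos (hν : ν < 0) (hsin : sin (π * ν) < 0)
    (hzero : ∀ t ∈ Ioc 0 s, besselJ ν t ≠ 0) {t : ℝ} (ht : t ∈ Ioc 0 s) : 0 < besselJ ν t := by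
  rw [besselJ_eq_rpow_mul_besselClifford ν ht.1]
  exact mul_pos (rpow_pos_of_pos (half_pos ht.1) _)
    (besselClifford_pos hν hsin hzero (ht.1.le.trans ht.2) (half_sq_mem_Icc ht))

theorem besselJ_neg_pos (hν : ν < 0) (hsin : sin (π * ν) < 0)
    (hzero : ∀ t ∈ Ioc 0 s, besselJ ν t ≠ 0) {t : ℝ} (ht : t ∈ Ioc 0 s) : 0 < besselJ (-ν) t := by
  have hquot : 0 < besselQuotient ν ((t / 2) ^ 2) := by
    rw [← besselQuotient_zero hν]
    exact strictMonoOn_besselQuotient hν hsin hzero (ht.1.le.trans ht.2)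
      (left_mem_Icc.2 (sq_nonneg _)) (half_sq_mem_Icc ht) (pow_pos (half_pos ht.1) 2)
  rw [besselJ_neg_eq_besselQuotient_mul ht.1 (hzero t ht)]
  exact mul_pos hquot (besselJ_pos hν hsin hzero ht)

/-- The cross product of `J_ν` and `J_{-ν}`: as a function of `v`, the combination of the two that
vanishes at `u`. -/
noncomputable def besselCross (ν u v : ℝ) : ℝ :=
  besselJ ν u * besselJ (-ν) v - besselJ (-ν) u * besselJ ν v

theorem besselCross_nonneg (hν : ν < 0) (hsin : sin (π * ν) < 0)
    (hzero : ∀ t ∈ Ioc 0 s, besselJ ν t ≠ 0) {u v : ℝ} (hu : 0 < u) (huv : u ≤ v)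
    (hv : v ≤ s) :
    0 ≤ besselCross ν u v := by
  have hu_mem : u ∈ Ioc 0 s := ⟨hu, huv.trans hv⟩
  have hv_mem : v ∈ Ioc 0 s := ⟨hu.trans_le huv, hv⟩
  have hquot : besselQuotient ν ((u / 2) ^ 2) ≤ besselQuotient ν ((v / 2) ^ 2) :=
    (strictMonoOn_besselQuotient hν hsin hzero (hv_mem.1.le.trans hv)).monotoneOn
      (half_sq_mem_Icc hu_mem) (half_sq_mem_Icc hv_mem) (by gcongr)
  have hcross : besselCross ν u v = besselJ ν u * besselJ ν v *
      (besselQuotient ν ((v / 2) ^ 2) - besselQuotient ν ((u / 2) ^ 2)) := by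
    rw [besselCross, besselJ_neg_eq_besselQuotient_mul hu (hzero u hu_mem),
      besselJ_neg_eq_besselQuotient_mul hv_mem.1 (hzero v hv_mem)]
    ring
  rw [hcross]
  exact mul_nonneg (mul_pos (besselJ_pos hν hsin hzero hu_mem)
    (besselJ_pos hν hsin hzero hv_mem)).le (sub_nonneg.2 hquot)

end OppositeOrders

section Green

/-- The denominator `D = J_{-ν}(√λ) - δ η^ν J_{-ν}(η√λ)` of the Green's function. -/
noncomputable def greenDenom (ν lam δ η : ℝ) : ℝ :=
  besselJ (-ν) √lam - δ * η ^ ν * besselJ (-ν) (η * √lam)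

/-- The analogue `δ η^ν J_ν(η√λ) - J_ν(√λ)` of `-D` for the solution `J_ν`, which hypothesis `(H₀)`
requires to be nonnegative. -/
noncomputable def greenDefect (ν lam δ η : ℝ) : ℝ :=
  δ * η ^ ν * besselJ ν (η * √lam) - besselJ ν √lam

/-- The Green's function with its prefactor `π csc(πν)/2 · t^ν x^ν` and its denominator `D` removed,
rearranged so that every term is visibly nonnegative under `(H₀)`. -/
noncomputable def greenNumerator (ν lam δ η x t : ℝ) : ℝ :=
  if t ≤ η then
    if x ≤ t then
      besselJ (-ν) (x * √lam) * (besselJ (-ν) (t * √lam) * greenDefect ν lam δ η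
        + besselJ ν (t * √lam) * greenDenom ν lam δ η)
    else
      besselJ (-ν) (t * √lam) * (besselJ (-ν) (x * √lam) * greenDefect ν lam δ η
        + besselJ ν (x * √lam) * greenDenom ν lam δ η)
  else
    if x ≤ t then
      besselJ (-ν) (x * √lam) * besselCross ν (t * √lam) √lam
    else
      besselJ (-ν) (t * √lam) * besselCross ν (x * √lam) √lam
        + δ * η ^ ν * besselJ (-ν) (η * √lam) * besselCross ν (t * √lam) (x * √lam)

variable {ν lam δ η x t : ℝ}

theorem greenJ_eq_mul_greenNumerator_div (hD : greenDenom ν lam δ η ≠ 0) :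
    greenJ ν lam δ η x t = π * (sin (π * ν))⁻¹ / 2 * (t ^ ν * x ^ ν) *
      (greenNumerator ν lam δ η x t / greenDenom ν lam δ η) := by
  simp only [greenJ, greenNumerator, greenDefect, besselCross]
  rw [← greenDenom]
  split_ifs
  · rw [mul_div_assoc', div_left_inj' hD, greenDenom]
    ring
  · rw [div_add' _ _ _ hD, mul_div_assoc', mul_div_assoc', div_left_inj' hD]
    ring
  · rw [mul_div_assoc', div_left_inj' hD]
    ring
  · rw [div_add' _ _ _ hD, mul_div_assoc', mul_div_assoc', div_left_inj' hD, greenDenom]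
    ring

-- For `ν < 0` this rests on the convention `0 ^ ν = 0`; `x ^ ν J_{-ν}(x√λ)` has a limit `≠ 0`.
theorem greenJ_zero_left (hν : ν ≠ 0) : greenJ ν lam δ η 0 t = 0 := by
  simp [greenJ, zero_rpow hν]

theorem sin_pi_mul_neg_of_mem_Ioo (k : ℤ) (hν : ν ∈ Ioo (2 * k - 1 : ℝ) (2 * k)) :
    sin (π * ν) < 0 := by
  rw [← sin_sub_int_mul_two_pi _ k]
  apply sin_neg_of_neg_of_neg_pi_lt <;> nlinarith [pi_pos, hν.1, hν.2]

theorem pi_mul_inv_sin_div_two_neg (hsin : sin (π * ν) < 0) :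
    π * (sin (π * ν))⁻¹ / 2 < 0 :=
  div_neg_of_neg_of_pos (mul_neg_of_pos_of_neg pi_pos (inv_lt_zero.2 hsin)) two_pos

theorem greenNumerator_nonneg (hν : ν < 0) (hsin : sin (π * ν) < 0) (hη : 0 < η) (hlam : 0 < lam)
    (hzero : ∀ r ∈ Ioc 0 √lam, besselJ ν r ≠ 0) (hdefect : 0 ≤ greenDefect ν lam δ η)
    (hdenom : 0 ≤ greenDenom ν lam δ η) (hx : x ∈ Ioc 0 1) (ht : t ∈ Ioc 0 1) :
    0 ≤ greenNumerator ν lam δ η x t := by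
  have hs : 0 < √lam := sqrt_pos.2 hlam
  have hmem {r : ℝ} (hr : r ∈ Ioc 0 1) : r * √lam ∈ Ioc 0 √lam :=
    ⟨mul_pos hr.1 hs, mul_le_of_le_one_left hs.le hr.2⟩
  have hpos {r : ℝ} (hr : r ∈ Ioc 0 1) : 0 < besselJ ν (r * √lam) :=
    besselJ_pos hν hsin hzero (hmem hr)
  have hneg_pos {r : ℝ} (hr : r ∈ Ioc 0 1) : 0 < besselJ (-ν) (r * √lam) :=
    besselJ_neg_pos hν hsin hzero (hmem hr)
  have hcross_one {r : ℝ} (hr : r ∈ Ioc 0 1) : 0 ≤ besselCross ν (r * √lam) √lam :=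
    besselCross_nonneg hν hsin hzero (hmem hr).1 (hmem hr).2 le_rfl
  have hJx := hneg_pos hx
  have hJt := hneg_pos ht
  rw [greenNumerator]
  split_ifs with htη hxt hxt
  · have := hpos ht
    positivity
  · have := hpos hx
    positivity
  · exact mul_nonneg hJx.le (hcross_one ht)
  · have hη_mem : η ∈ Ioc 0 1 := ⟨hη, (not_le.1 htη).le.trans ht.2⟩
    have hδη : 0 < δ * η ^ ν := pos_of_mul_pos_left
      ((besselJ_pos hν hsin hzero (right_mem_Ioc.2 hs)).trans_le (sub_nonneg.1 hdefect))
      (hpos hη_mem).le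
    have hcross : 0 ≤ besselCross ν (t * √lam) (x * √lam) :=
      besselCross_nonneg hν hsin hzero (hmem ht).1
        (mul_le_mul_of_nonneg_right (not_le.1 hxt).le hs.le) (hmem hx).2
    exact add_nonneg (mul_nonneg hJt.le (hcross_one hx))
      (mul_nonneg (mul_pos hδη (hneg_pos hη_mem)).le hcross)

theorem greenJ_nonpos_general (hν : ν < 0) (hsin : sin (π * ν) < 0) (hη : 0 < η) (hlam : 0 < lam)
    (hzero : ∀ r ∈ Ioc 0 √lam, besselJ ν r ≠ 0)
    (hdefect : 0 ≤ δ * η ^ ν * besselJ ν (η * √lam) - besselJ ν √lam)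
    (hdenom : 0 < besselJ (-ν) √lam - δ * η ^ ν * besselJ (-ν) (η * √lam))
    (hx : x ∈ Icc 0 1) (ht : t ∈ Ioc 0 1) : greenJ ν lam δ η x t ≤ 0 := by
  rcases hx.1.eq_or_lt with rfl | hx_pos
  · exact (greenJ_zero_left hν.ne).le
  have hnum : 0 ≤ greenNumerator ν lam δ η x t :=
    greenNumerator_nonneg hν hsin hη hlam hzero hdefect hdenom.le ⟨hx_pos, hx.2⟩ ht
  have hrpow : 0 < t ^ ν * x ^ ν := mul_pos (rpow_pos_of_pos ht.1 ν) (rpow_pos_of_pos hx_pos ν)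
  rw [greenJ_eq_mul_greenNumerator_div hdenom.ne']
  exact mul_nonpos_of_nonpos_of_nonneg
    (mul_neg_of_neg_of_pos (pi_mul_inv_sin_div_two_neg hsin) hrpow).le
    (div_nonneg hnum hdenom.le)

end Green

/-- **Lemma 3.3, sign of the Green's function under (H₀).**
For `α ∈ (4n−3, 4n−1)`, `ν = (1−α)/2`, `0 < η < 1` and hypothesis `(H₀)`
(`0 < λ < j²_{ν,1}`, `0 < δ < 1`, `δη^ν J_ν(η√λ) − J_ν(√λ) ≥ 0`,
`J_{−ν}(√λ) − δη^ν J_{−ν}(η√λ) > 0`), the Green's function satisfies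
`G(x,t) ≤ 0` on `[0,1] × (0,1]`. -/
theorem greenJ_nonpos (n : ℕ) (hn : 1 ≤ n) (α lam δ η ν : ℝ)
    (hα1 : 4 * (n : ℝ) - 3 < α) (hα2 : α < 4 * (n : ℝ) - 1)
    (hν : ν = (1 - α) / 2)
    (hη0 : 0 < η) (hη1 : η < 1)
    (hlam : 0 < lam)
    (hzero : ∀ t : ℝ, 0 < t → t ≤ Real.sqrt lam → besselJ ν t ≠ 0)
    (hδ0 : 0 < δ) (hδ1 : δ < 1)
    (hH1 : 0 ≤ δ * η ^ ν * besselJ ν (η * Real.sqrt lam) - besselJ ν (Real.sqrt lam))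
    (hH2 : 0 < besselJ (-ν) (Real.sqrt lam)
        - δ * η ^ ν * besselJ (-ν) (η * Real.sqrt lam)) :
    ∀ x ∈ Set.Icc (0 : ℝ) 1, ∀ t ∈ Set.Ioc (0 : ℝ) 1, greenJ ν lam δ η x t ≤ 0 := by
  have hn' : (1 : ℝ) ≤ n := by exact_mod_cast hn
  have hsin : sin (π * ν) < 0 :=
    sin_pi_mul_neg_of_mem_Ioo (1 - n) ⟨by push_cast; linarith, by push_cast; linarith⟩
  intro x hx t ht
  exact greenJ_nonpos_general (by linarith) hsin hη0 hlam (fun r hr ↦ hzero r hr.1 hr.2) hH1 hH2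
    hx ht
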